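/- Let ζ = exp(2πi/5) ∈ ℂ. Define the set I = {v ∈ (ℤ/5ℤ)^4 : v ≠ 0 and v_1^2 + 2v_2^2 + 2v_3^2 + 2v_4^2 = 0 in ℤ/5ℤ} of nonzero isotropic vectors, and the function Σ : (ℤ/5ℤ)^4 → ℂ with Σ(0) = 4, Σ(v) = −1 for v ∈ I, and Σ(v) = 0 otherwise. Define the transformation h on functions f : (ℤ/5ℤ)^4 → ℂ by h(f)(u) = (1/25) ∑_{w ∈ (ℤ/5ℤ)^4} ζ^{(u_1 w_1 + 2 u_2 w_2 + 2 u_3 w_3 + 2 u_4 w_4).val} f(w), where (·).val ∈ {0,1,2,3,4} is the canonical representative of an element of ℤ/5ℤ. Then h(Σ) = −Σ. -/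

import Mathlib

open scoped ComplexConjugate

/-!
Let `q = |F|`, let `Q` be a diagonal form in `2m` variables with bilinear form `B`, and let
`ε = ±1` be the quadratic character of its signed discriminant. Orthogonality of characters
writes `q · 1_{Q = 0}` as `∑ₜ ψ(t Q)`. Under the kernel `ψ(B(u, w))`, the summand `t = 0` is
transformed into `q²ᵐ δ₀`. For `t ≠ 0`, completing the square turns the transform of `ψ(t Q)` into
`ψ(-Q/(4t))` times a product of `2m` quadratic Gauss sums, and this product is `ε qᵐ` whatever `t`
is. As `t ↦ -1/(4t)` permutes `Fˣ`, the transform maps `q · 1_{Q = 0}` to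
`q²ᵐ δ₀ + ε qᵐ (q · 1_{Q = 0} - 1)`, while it maps `δ₀` to `1`. So `qᵐ δ₀ + ε q · 1_{Q = 0}` is an
eigenfunction with eigenvalue `ε qᵐ`. For the form `⟨1, 2, 2, 2⟩` over `𝔽₅` one has `ε = -1`, and
the eigenfunction is `5 Σ`.
-/

section SumsOverProducts

variable {ι : Type*}

lemma addChar_sum_eq_prod {A M : Type*} [AddCommMonoid A] [CommMonoid M] (ψ : AddChar A M)
    (s : Finset ι) (f : ι → A) : ψ (∑ i ∈ s, f i) = ∏ i ∈ s, ψ (f i) :=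
  map_prod ψ.toMonoidHom (fun i ↦ Multiplicative.ofAdd (f i)) s

lemma sum_addChar_sum_eq_prod {κ A R : Type*} [Fintype ι] [DecidableEq ι] [Fintype κ]
    [AddCommMonoid A] [CommSemiring R] (ψ : AddChar A R) (f : ι → κ → A) :
    ∑ w : ι → κ, ψ (∑ i, f i (w i)) = ∏ i, ∑ x, ψ (f i x) := by
  simp only [addChar_sum_eq_prod, Fintype.prod_sum]

end SumsOverProducts

section QuadraticSums

open AddChar

variable {F R : Type*} [Field F] [Fintype F] [CommRing R]

omit [Fintype F] in
lemma four_ne_zero_of_ringChar_ne_two (hF : ringChar F ≠ 2) : (4 : F) ≠ 0 := by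
  rw [show (4 : F) = 2 ^ 2 by norm_num]
  exact pow_ne_zero 2 (Ring.two_ne_zero hF)

lemma sum_addChar_mul_sq_add_mul (hF : ringChar F ≠ 2) (ψ : AddChar F R) {c : F} (hc : c ≠ 0)
    (b : F) : ∑ x, ψ (c * x ^ 2 + b * x) = ψ (-(b ^ 2 / (4 * c))) * ∑ x, ψ (c * x ^ 2) := by
  have h2 : (2 : F) ≠ 0 := Ring.two_ne_zero hF
  have h4 : (4 : F) ≠ 0 := four_ne_zero_of_ringChar_ne_two hF
  rw [Finset.mul_sum]
  refine Fintype.sum_equiv (Equiv.addRight (b / (2 * c))) _ _ fun x ↦ ?_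
  rw [← map_add_eq_mul, Equiv.coe_addRight]
  congr 1
  field_simp
  ring

variable [DecidableEq F]

variable (F R) in
/-- The quadratic character of `F` with values in `R`, in the form in which it enters Gauss sums
over `R`. -/
def quadraticCharIn : MulChar F R := (quadraticChar F).ringHomComp (Int.castRingHom R)

lemma quadraticCharIn_apply (a : F) : quadraticCharIn F R a = (quadraticChar F a : R) := rfl

lemma quadraticCharIn_isQuadratic : (quadraticCharIn F R).IsQuadratic :=
  (quadraticChar_isQuadratic F).comp _

lemma quadraticCharIn_ne_one (hF : ringChar F ≠ 2) (hR : ringChar R ≠ 2) [Nontrivial R] :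
    quadraticCharIn F R ≠ 1 := by
  obtain ⟨a, ha⟩ := quadraticChar_exists_neg_one' hF
  refine MulChar.ne_one_iff.mpr ⟨a, ?_⟩
  rw [quadraticCharIn_apply, ha, Int.cast_neg, Int.cast_one]
  exact Ring.neg_one_ne_one_of_char_ne_two hR

lemma gaussSum_quadraticCharIn_sq [IsDomain R] (hF : ringChar F ≠ 2) (hR : ringChar R ≠ 2)
    {ψ : AddChar F R} (hψ : ψ.IsPrimitive) :
    gaussSum (quadraticCharIn F R) ψ ^ 2 = quadraticCharIn F R (-1) * Fintype.card F :=
  gaussSum_sq (quadraticCharIn_ne_one hF hR) quadraticCharIn_isQuadratic hψ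

lemma sum_sq_eq_sum_quadraticCharIn_add_one_mul (hF : ringChar F ≠ 2) (f : F → R) :
    ∑ x, f (x ^ 2) = ∑ y, (quadraticCharIn F R y + 1) * f y := by
  rw [← Finset.sum_fiberwise Finset.univ (fun x : F ↦ x ^ 2)]
  refine Finset.sum_congr rfl fun y _ ↦ ?_
  have hcard : ((Finset.univ.filter fun x : F ↦ x ^ 2 = y).card : R) =
      quadraticCharIn F R y + 1 := by
    have h : ((Finset.univ.filter fun x : F ↦ x ^ 2 = y).card : ℤ) = quadraticChar F y + 1 := by
      simpa using quadraticChar_card_sqrts hF y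
    rw [quadraticCharIn_apply]
    exact_mod_cast congrArg (Int.cast : ℤ → R) h
  rw [← hcard, ← nsmul_eq_mul]
  refine Finset.sum_eq_card_nsmul fun x hx ↦ ?_
  rw [(Finset.mem_filter.mp hx).2]

lemma sum_addChar_mul_sq [IsDomain R] (hF : ringChar F ≠ 2) {ψ : AddChar F R}
    (hψ : ψ.IsPrimitive) {c : F} (hc : c ≠ 0) :
    ∑ x, ψ (c * x ^ 2) = quadraticCharIn F R c * gaussSum (quadraticCharIn F R) ψ := by
  have hshift := gaussSum_mulShift_eq (quadraticCharIn F R) ψ (Units.mk0 c hc)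
  rw [quadraticCharIn_isQuadratic.inv, Units.val_mk0] at hshift
  rw [sum_sq_eq_sum_quadraticCharIn_add_one_mul hF fun y ↦ ψ (c * y), ← hshift, gaussSum]
  simp only [add_mul, one_mul, Finset.sum_add_distrib, mulShift_apply]
  rw [add_eq_left]
  simpa [mul_comm c, hc] using sum_mulShift c hψ

lemma sum_erase_zero_addChar_neg_div_four_mul [IsDomain R] (hF : ringChar F ≠ 2) {ψ : AddChar F R}
    (hψ : ψ.IsPrimitive) (c : F) :
    ∑ t ∈ Finset.univ.erase 0, ψ (-(c / (4 * t))) =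
      (if c = 0 then (Fintype.card F : R) else 0) - 1 := by
  have h4 : (-4 : F) ≠ 0 := neg_ne_zero.mpr (four_ne_zero_of_ringChar_ne_two hF)
  have hall : ∑ t, ψ (-(c / (4 * t))) = if c = 0 then (Fintype.card F : R) else 0 := by
    rw [← Nat.cast_zero (R := R), ← Nat.cast_ite, ← sum_mulShift c hψ]
    refine Fintype.sum_equiv ((Equiv.mulLeft₀ (-4) h4).trans (Equiv.inv F)) _ _ fun t ↦ ?_
    congr 1
    simp [div_eq_mul_inv, mul_comm]
  -- The term `t = 0` is `1`, because division by zero gives zero.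
  rw [Finset.sum_erase_eq_sub (Finset.mem_univ 0), hall]
  simp

end QuadraticSums

section DiagonalForms

open AddChar

variable {F R ι : Type*} [Field F] [Fintype ι]

/-- The symmetric bilinear form `⟨a₁, …, aₙ⟩` with diagonal Gram matrix. The quadratic form `Q` of
the same name is its restriction `v ↦ diagForm a v v` to the diagonal. -/
def diagForm (a u w : ι → F) : F := ∑ i, a i * u i * w i

variable [Fintype F] [DecidableEq F]

/-- The quadratic character `ε` of the signed discriminant `(-1)ᵐ a₁ ⋯ aₙ` of the diagonal form
`⟨a₁, …, aₙ⟩`. For a nondegenerate form of rank `n = 2m` it is `1` if the form is an orthogonal sum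
of hyperbolic planes and `-1` if not. -/
def discrSign (a : ι → F) (m : ℕ) : ℤ := quadraticChar F ((-1) ^ m * ∏ i, a i)

lemma discrSign_mul_self {a : ι → F} (ha : ∀ i, a i ≠ 0) (m : ℕ) :
    discrSign a m * discrSign a m = 1 := by
  rw [← sq]
  exact quadraticChar_sq_one <| mul_ne_zero (pow_ne_zero m (neg_ne_zero.mpr one_ne_zero))
    (Finset.prod_ne_zero_iff.mpr fun i _ ↦ ha i)

variable [CommRing R]

variable (R) in
/-- The function `qᵐ δ₀ + ε q · 1_{Q = 0}`, supported on the isotropic vectors. Its values for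
`⟨1, 2, 2, 2⟩` over `𝔽₅` and `m = 2` are five times those of `Σ`; the factor avoids denominators. -/
def isotropicWeight (a : ι → F) (m : ℕ) (v : ι → F) : R :=
  (if v = 0 then (Fintype.card F : R) ^ m else 0) +
    discrSign a m * if diagForm a v v = 0 then (Fintype.card F : R) else 0

variable [IsDomain R]

lemma prod_sum_addChar_mul_sq (hF : ringChar F ≠ 2) (hR : ringChar R ≠ 2) {ψ : AddChar F R}
    (hψ : ψ.IsPrimitive) {a : ι → F} (ha : ∀ i, a i ≠ 0) {m : ℕ} (hm : Fintype.card ι = 2 * m)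
    {t : F} (ht : t ≠ 0) :
    ∏ i, ∑ x, ψ (t * a i * x ^ 2) = discrSign a m * (Fintype.card F : R) ^ m := by
  have hχt : quadraticCharIn F R t ^ 2 = 1 := by
    rw [quadraticCharIn_apply]
    exact_mod_cast congrArg (Int.cast : ℤ → R) (quadraticChar_sq_one ht)
  calc ∏ i, ∑ x, ψ (t * a i * x ^ 2)
    _ = ∏ i, quadraticCharIn F R (t * a i) * gaussSum (quadraticCharIn F R) ψ :=
      Finset.prod_congr rfl fun i _ ↦ sum_addChar_mul_sq hF hψ (mul_ne_zero ht (ha i))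
    _ = (quadraticCharIn F R t ^ 2) ^ m * quadraticCharIn F R (∏ i, a i) *
          (gaussSum (quadraticCharIn F R) ψ ^ 2) ^ m := by
      simp only [Finset.prod_mul_distrib, Finset.prod_const, Finset.card_univ, hm, map_mul,
        map_prod, pow_mul]
    _ = quadraticCharIn F R ((-1) ^ m * ∏ i, a i) * (Fintype.card F : R) ^ m := by
      rw [hχt, gaussSum_quadraticCharIn_sq hF hR hψ, map_mul, map_pow]
      ring
    _ = discrSign a m * (Fintype.card F : R) ^ m := rfl

variable [DecidableEq ι]

lemma sum_addChar_diagForm {ψ : AddChar F R} (hψ : ψ.IsPrimitive) {a : ι → F}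
    (ha : ∀ i, a i ≠ 0) (u : ι → F) :
    ∑ w, ψ (diagForm a u w) = if u = 0 then (Fintype.card F : R) ^ Fintype.card ι else 0 := by
  have hcoord (i : ι) : ∑ x, ψ (a i * u i * x) = if u i = 0 then (Fintype.card F : R) else 0 := by
    simpa [mul_comm, ha i] using sum_mulShift (a i * u i) hψ
  simp only [diagForm, sum_addChar_sum_eq_prod ψ fun i x ↦ a i * u i * x, hcoord,
    Fintype.prod_ite_zero, Finset.prod_const, Finset.card_univ, funext_iff, Pi.zero_apply]

lemma sum_addChar_mul_diagForm_self_add (hF : ringChar F ≠ 2) (hR : ringChar R ≠ 2)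
    {ψ : AddChar F R} (hψ : ψ.IsPrimitive) {a : ι → F} (ha : ∀ i, a i ≠ 0) {m : ℕ}
    (hm : Fintype.card ι = 2 * m) {t : F} (ht : t ≠ 0) (u : ι → F) :
    ∑ w, ψ (t * diagForm a w w + diagForm a u w) =
      discrSign a m * (Fintype.card F : R) ^ m * ψ (-(diagForm a u u / (4 * t))) := by
  have hcoord (i : ι) : ∑ x, ψ (t * a i * x ^ 2 + a i * u i * x) =
      ψ (-(a i * u i * u i / (4 * t))) * ∑ x, ψ (t * a i * x ^ 2) := by
    rw [sum_addChar_mul_sq_add_mul hF ψ (mul_ne_zero ht (ha i))]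
    congr 3
    rw [← mul_assoc, ← mul_div_mul_right (a i * u i * u i) (4 * t) (ha i)]
    ring
  have hsplit (w : ι → F) : t * diagForm a w w + diagForm a u w =
      ∑ i, (t * a i * w i ^ 2 + a i * u i * w i) := by
    simp only [diagForm, Finset.mul_sum, Finset.sum_add_distrib]
    congr! 2
    ring
  simp only [hsplit, sum_addChar_sum_eq_prod ψ fun i x ↦ t * a i * x ^ 2 + a i * u i * x, hcoord,
    Finset.prod_mul_distrib, prod_sum_addChar_mul_sq hF hR hψ ha hm ht, ← addChar_sum_eq_prod,
    Finset.sum_neg_distrib, ← Finset.sum_div]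
  rw [mul_comm, diagForm]

lemma sum_addChar_diagForm_mul_isotropic (hF : ringChar F ≠ 2) (hR : ringChar R ≠ 2)
    {ψ : AddChar F R} (hψ : ψ.IsPrimitive) {a : ι → F} (ha : ∀ i, a i ≠ 0) {m : ℕ}
    (hm : Fintype.card ι = 2 * m) (u : ι → F) :
    ∑ w, ψ (diagForm a u w) * (if diagForm a w w = 0 then (Fintype.card F : R) else 0) =
      (if u = 0 then (Fintype.card F : R) ^ (2 * m) else 0) +
        discrSign a m * (Fintype.card F : R) ^ m *
          ((if diagForm a u u = 0 then (Fintype.card F : R) else 0) - 1) := by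
  have hind (w : ι → F) : (if diagForm a w w = 0 then (Fintype.card F : R) else 0) =
      ∑ t, ψ (t * diagForm a w w) := by
    simpa using (sum_mulShift (diagForm a w w) hψ).symm
  calc ∑ w, ψ (diagForm a u w) * (if diagForm a w w = 0 then (Fintype.card F : R) else 0)
    _ = ∑ t, ∑ w, ψ (t * diagForm a w w + diagForm a u w) := by
      rw [Finset.sum_comm]
      refine Finset.sum_congr rfl fun w _ ↦ ?_
      rw [hind, Finset.mul_sum]
      refine Finset.sum_congr rfl fun t _ ↦ ?_
      rw [map_add_eq_mul, mul_comm]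
    _ = ∑ w, ψ (diagForm a u w) +
          ∑ t ∈ Finset.univ.erase 0, ∑ w, ψ (t * diagForm a w w + diagForm a u w) := by
      rw [← Finset.add_sum_erase _ _ (Finset.mem_univ (0 : F))]
      simp only [zero_mul, zero_add]
    _ = _ := by
      rw [sum_addChar_diagForm hψ ha, hm, Finset.sum_congr rfl fun t ht ↦
        sum_addChar_mul_diagForm_self_add hF hR hψ ha hm (Finset.ne_of_mem_erase ht) u,
        ← Finset.mul_sum, sum_erase_zero_addChar_neg_div_four_mul hF hψ]

theorem macwilliams_anti_invariant_general (hF : ringChar F ≠ 2) (hR : ringChar R ≠ 2)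
    {ψ : AddChar F R} (hψ : ψ.IsPrimitive) {a : ι → F} (ha : ∀ i, a i ≠ 0) {m : ℕ}
    (hm : Fintype.card ι = 2 * m) (u : ι → F) :
    ∑ w, ψ (diagForm a u w) * isotropicWeight R a m w =
      discrSign a m * (Fintype.card F : R) ^ m * isotropicWeight R a m u := by
  have hε : (discrSign a m : R) * discrSign a m = 1 := by
    exact_mod_cast congrArg (Int.cast : ℤ → R) (discrSign_mul_self ha m)
  have hdelta : ∑ w, ψ (diagForm a u w) * (if w = 0 then (Fintype.card F : R) ^ m else 0) =
      (Fintype.card F : R) ^ m := by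
    simp [diagForm]
  simp only [isotropicWeight, mul_add, Finset.sum_add_distrib, hdelta, mul_left_comm (ψ _),
    ← Finset.mul_sum, sum_addChar_diagForm_mul_isotropic hF hR hψ ha hm]
  split_ifs <;> linear_combination (-(Fintype.card F : R) ^ m) * hε

end DiagonalForms

section FormOverZModFive

lemma exp_pow_val_eq_stdAddChar (N : ℕ) [NeZero N] (x : ZMod N) :
    Complex.exp (2 * Real.pi * Complex.I / N) ^ x.val = ZMod.stdAddChar x := by
  rw [← Complex.exp_nat_mul]
  conv_rhs => rw [← ZMod.natCast_zmod_val x, ← Int.cast_natCast, ZMod.stdAddChar_coe]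
  push_cast
  ring_nf

lemma fact_prime_five : Fact (Nat.Prime 5) := ⟨by norm_num⟩

attribute [local instance] fact_prime_five

lemma diagForm_one_two_two_two (u w : Fin 4 → ZMod 5) :
    diagForm ![1, 2, 2, 2] u w =
      u 0 * w 0 + 2 * u 1 * w 1 + 2 * u 2 * w 2 + 2 * u 3 * w 3 := by
  simp [diagForm, Fin.sum_univ_four]

lemma discrSign_one_two_two_two : discrSign (![1, 2, 2, 2] : Fin 4 → ZMod 5) 2 = -1 := by
  decide

lemma isotropicWeight_one_two_two_two (v : Fin 4 → ZMod 5) :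
    isotropicWeight ℂ ![1, 2, 2, 2] 2 v = 5 * if v = 0 then 4
      else if v 0 ^ 2 + 2 * v 1 ^ 2 + 2 * v 2 ^ 2 + 2 * v 3 ^ 2 = 0 then -1 else 0 := by
  have hQ : diagForm ![1, 2, 2, 2] v v =
      v 0 ^ 2 + 2 * v 1 ^ 2 + 2 * v 2 ^ 2 + 2 * v 3 ^ 2 := by
    rw [diagForm_one_two_two_two]
    ring
  rw [isotropicWeight, discrSign_one_two_two_two, hQ, ZMod.card]
  by_cases hv : v = 0
  · norm_num [hv]
  · simp [hv]

lemma sum_stdAddChar_mul_isotropicWeight_one_two_two_two (u : Fin 4 → ZMod 5) :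
    ∑ w, ZMod.stdAddChar (diagForm ![1, 2, 2, 2] u w) * isotropicWeight ℂ ![1, 2, 2, 2] 2 w =
      -25 * isotropicWeight ℂ ![1, 2, 2, 2] 2 u := by
  rw [macwilliams_anti_invariant_general (by simp [ZMod.ringChar_zmod_n])
    (by simp [ringChar.eq_zero]) (ZMod.isPrimitive_stdAddChar 5) (by decide) (by simp),
    discrSign_one_two_two_two, ZMod.card]
  norm_num

end FormOverZModFive

/-- Let `ζ = exp(2πi/5)`, let `Σ : (ℤ/5ℤ)⁴ → ℂ` take the value `4` at `0`, `−1` on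
the nonzero isotropic vectors of the quadratic form `v₁² + 2v₂² + 2v₃² + 2v₄²`, and
`0` elsewhere.  Let `h` be the MacWilliams transformation
`h(f)(u) = (1/25) ∑_w ζ^{(u₁w₁ + 2u₂w₂ + 2u₃w₃ + 2u₄w₄).val} f(w)`.
Then `h(Σ) = −Σ`. -/
theorem macwilliams_anti_invariant :
    let ζ : ℂ := Complex.exp (2 * Real.pi * Complex.I / 5)
    let Sig : (Fin 4 → ZMod 5) → ℂ := fun w =>
      if w = 0 then 4
      else if w 0 ^ 2 + 2 * w 1 ^ 2 + 2 * w 2 ^ 2 + 2 * w 3 ^ 2 = 0 then -1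
      else 0
    ∀ u : Fin 4 → ZMod 5,
      (1 / 25 : ℂ) * ∑ w : Fin 4 → ZMod 5,
          ζ ^ ((u 0 * w 0 + 2 * u 1 * w 1 + 2 * u 2 * w 2 + 2 * u 3 * w 3).val) * Sig w
        = - Sig u := by
  intro ζ Sig u
  have := fact_prime_five
  have hζ (x : ZMod 5) : ζ ^ x.val = ZMod.stdAddChar x := exp_pow_val_eq_stdAddChar 5 x
  have hSig (w : Fin 4 → ZMod 5) : Sig w = 1 / 5 * isotropicWeight ℂ ![1, 2, 2, 2] 2 w := by
    rw [isotropicWeight_one_two_two_two, ← mul_assoc, one_div_mul_cancel (by norm_num), one_mul]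
  simp only [hζ, hSig, ← diagForm_one_two_two_two, mul_left_comm _ (1 / 5 : ℂ), ← Finset.mul_sum,
    sum_stdAddChar_mul_isotropicWeight_one_two_two_two]
  ring
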